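/- arXiv:2508.15006 — 4 statements merged into one kernel-verified Lean document; each statement's English description precedes it below -/
import Mathlib

section
/- Let G be a finite tree (a connected acyclic simple graph) with at least two vertices, and let v be a vertex of G with degree at most 2. Define the graph G' on the vertex set V(G) \ {v} by: u is adjacent to w in G' if and only if u ≠ w and (u is adjacent to w in G, or both u and w are adjacent to v in G). Then G' is a tree. -/
namespace SimpleGraph

/-- In an acyclic graph, two distinct neighbors of `v` lie in different components once `v` is
removed. -/
theorem IsAcyclic.not_reachable_induce_ne_of_adj {V : Type*} {G : SimpleGraph V}
    (hG : G.IsAcyclic) {v : V} {a b : {u : V // u ≠ v}} (hab : a ≠ b)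
    (ha : G.Adj a.1 v) (hb : G.Adj b.1 v) : ¬ (G.induce {u | u ≠ v}).Reachable a b := by
  intro h
  have hbridge := isAcyclic_iff_forall_adj_isBridge.mp hG ha
  rw [isBridge_iff] at hbridge
  refine hbridge ?_
  let f : G.induce {u | u ≠ v} →g G.deleteEdges {s(a.1, v)} :=
    { toFun := Subtype.val
      map_rel' := by
        rintro ⟨x, hx⟩ ⟨y, hy⟩ hxy
        have hx' : x ≠ v := hx
        have hy' : y ≠ v := hy
        have hxy' : G.Adj x y := hxy
        simp [deleteEdges_adj, hxy', hx', hy'] }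
  have hbv : (G.deleteEdges {s(a.1, v)}).Adj b.1 v := by
    have hba : b.1 ≠ a.1 := fun h => hab (Subtype.ext h.symm)
    simp [deleteEdges_adj, hb, hba, b.2]
  exact (h.map f).trans hbv.reachable

/-- Vertex elimination preserves connectedness: if `v` has a neighbor, any graph on the other
vertices that keeps their adjacencies and joins the neighbors of `v` pairwise is connected. -/
theorem Connected.of_eliminate_vertex {V : Type*} {G : SimpleGraph V} (hG : G.Connected)
    {v : V} (n : {u : V // u ≠ v}) (hn : G.Adj n.1 v) {G' : SimpleGraph {u : V // u ≠ v}}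
    (hG' : ∀ u w : {u : V // u ≠ v},
      u ≠ w → (G.Adj u.1 w.1 ∨ (G.Adj u.1 v ∧ G.Adj w.1 v)) → G'.Adj u w) :
    G'.Connected := by
  classical
  have : Nonempty {u : V // u ≠ v} := ⟨n⟩
  let f : V → {u : V // u ≠ v} := fun u => if h : u = v then n else ⟨u, h⟩
  have hf_self : f v = n := dif_pos rfl
  have hf_ne (u : V) (hu : u ≠ v) : f u = ⟨u, hu⟩ := dif_neg hu
  have key (u w : V) (h : G.Adj u w) : G'.Reachable (f u) (f w) := by
    by_cases heq : f u = f w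
    · rw [heq]
    refine (hG' _ _ heq ?_).reachable
    by_cases hu : u = v
    · subst hu
      rw [hf_self, hf_ne w h.ne']
      exact Or.inr ⟨hn, h.symm⟩
    by_cases hw : w = v
    · subst hw
      rw [hf_self, hf_ne u hu]
      exact Or.inr ⟨h, hn⟩
    rw [hf_ne u hu, hf_ne w hw]
    exact Or.inl h
  have walk_reachable {u w : V} (p : G.Walk u w) : G'.Reachable (f u) (f w) := by
    induction p with
    | nil => rfl
    | cons h _ ih => exact (key _ _ h).trans ih
  refine ⟨fun x y => ?_⟩
  obtain ⟨p⟩ := hG.preconnected x.1 y.1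
  simpa only [hf_ne _ x.2, hf_ne _ y.2] using walk_reachable p

end SimpleGraph


/-- **Kron reduction of a degree-≤2 vertex of a tree yields a tree.**
Let `G` be a finite tree with at least two vertices and `v` a vertex of degree
at most 2. The graph `G'` on the remaining vertices, in which `u, w` are
adjacent iff `u ≠ w` and either they were adjacent in `G` or both were
adjacent to `v`, is again a tree. -/
theorem kron_reduce_low_degree_vertex_tree {V : Type} [Fintype V] [DecidableEq V]
    (G : SimpleGraph V) [DecidableRel G.Adj]
    (hG : G.IsTree) (hcard : 1 < Fintype.card V)
    (v : V) (hdeg : G.degree v ≤ 2)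
    (G' : SimpleGraph {u : V // u ≠ v})
    (hG' : ∀ u w : {u : V // u ≠ v},
      G'.Adj u w ↔ u ≠ w ∧ (G.Adj u.1 w.1 ∨ (G.Adj u.1 v ∧ G.Adj w.1 v))) :
    G'.IsTree := by
  have : Nontrivial V := Fintype.one_lt_card_iff_nontrivial.mp hcard
  obtain ⟨n, hn⟩ := hG.connected.preconnected.exists_adj_of_nontrivial v
  refine ⟨hG.connected.of_eliminate_vertex ⟨n, hn.ne'⟩ hn.symm
    fun u w hne h => (hG' u w).mpr ⟨hne, h⟩, ?_⟩
  have hH : (G.induce {u | u ≠ v}).IsAcyclic := hG.isAcyclic.induce _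
  by_cases hex : ∃ a b : {u : V // u ≠ v}, a ≠ b ∧ G.Adj a.1 v ∧ G.Adj b.1 v
  · obtain ⟨a, b, hab, ha, hb⟩ := hex
    have hab' : a.1 ≠ b.1 := fun h => hab (Subtype.ext h)
    have hnbr : {a.1, b.1} = G.neighborFinset v := by
      refine Finset.eq_of_subset_of_card_le ?_ ?_
      · simp [Finset.insert_subset_iff, ha.symm, hb.symm]
      · rwa [Finset.card_pair hab', SimpleGraph.card_neighborFinset_eq_degree]
    have hmem (u : {u : V // u ≠ v}) (hu : G.Adj u.1 v) : u = a ∨ u = b := by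
      have : u.1 ∈ G.neighborFinset v := by simpa using hu.symm
      simpa [← hnbr, Subtype.ext_iff] using this
    refine (hH.sup_edge_of_not_reachable
      (hG.isAcyclic.not_reachable_induce_ne_of_adj hab ha hb)).anti fun u w h => ?_
    obtain ⟨hne, h | ⟨hu, hw⟩⟩ := (hG' u w).mp h
    · exact Or.inl h
    · refine Or.inr ((SimpleGraph.edge_adj ..).mpr ⟨?_, hne⟩)
      have := hmem u hu
      have := hmem w hw
      grind
  · refine hH.anti fun u w h => ?_
    obtain ⟨hne, h | ⟨hu, hw⟩⟩ := (hG' u w).mp h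
    · exact h
    · exact absurd ⟨u, w, hne, hu, hw⟩ hex
end

section
/- Let G be a finite tree, let S be a nonempty subset of its vertices, and let T be the minimal subtree of G spanning S (the union over all pairs of vertices of S of the unique G-path between them). Let K be any vertex set with S ⊆ K ⊆ V(T) that contains every vertex of T whose degree in T is at least 3. Define the graph H on vertex set K by: u is adjacent to w in H if and only if u ≠ w and every internal vertex of the unique path in T between u and w lies outside K. Then H is a tree. In particular, keeping, in addition to S, the vertices of degree at least 3 of T suffices to ensure a radial (tree) structure among the kept nodes after reducing all other vertices. -/
namespace SimpleGraph

variable {V : Type*} {G : SimpleGraph V}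

/-- Two paths that leave a common vertex `a`, having both arrived from the same neighbour `u`,
and stop at their first vertex in `K`, end at the same vertex when every vertex with three
neighbours in `A` lies in `K`. -/
theorem Walk.IsPath.end_unique_of_branch_mem [Finite V] {A K : Set V}
    (hdeg : ∀ x ∈ A, 3 ≤ (A ∩ G.neighborSet x).ncard → x ∈ K)
    {u a w w' : V} {p : G.Walk a w} {q : G.Walk a w'} (hp : p.IsPath) (hq : q.IsPath)
    (hua : G.Adj u a) (hu : u ∈ A) (hup : u ∉ p.support) (huq : u ∉ q.support)
    (hpA : ∀ x ∈ p.support, x ∈ A) (hqA : ∀ x ∈ q.support, x ∈ A)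
    (hpK : ∀ x ∈ p.support, x ≠ w → x ∉ K) (hqK : ∀ x ∈ q.support, x ≠ w' → x ∉ K)
    (hw : w ∈ K) (hw' : w' ∈ K) : w = w' := by
  induction p generalizing u w' with
  | nil =>
    by_contra hne
    exact hqK _ q.start_mem_support hne hw
  | @cons a b w hab p ih =>
    rw [cons_isPath_iff] at hp
    have haw : a ≠ w := fun h => hp.2 (h ▸ p.end_mem_support)
    have haK : a ∉ K := hpK a (by simp) haw
    cases q with
    | nil => exact absurd hw' haK
    | @cons _ c _ hac q =>
      rw [cons_isPath_iff] at hq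
      simp only [support_cons, List.mem_cons, forall_eq_or_imp, not_or] at hpA hqA hpK hqK hup huq
      have hbc : b = c := by
        by_contra hbc
        refine haK (hdeg a hpA.1 ?_)
        have hub : u ≠ b := fun h => hup.2 (h ▸ p.start_mem_support)
        have huc : u ≠ c := fun h => huq.2 (h ▸ q.start_mem_support)
        rw [← Set.ncard_eq_three.mpr ⟨u, b, c, hub, huc, hbc, rfl⟩]
        refine Set.ncard_le_ncard ?_ (Set.toFinite _)
        rintro x (rfl | rfl | rfl)
        · exact ⟨hu, hua.symm⟩
        · exact ⟨hpA.2 _ p.start_mem_support, hab⟩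
        · exact ⟨hqA.2 _ q.start_mem_support, hac⟩
      subst hbc
      exact ih hp.1 hq.1 hab hpA.1 hp.2 hq.2 hpA.2 hqA.2 hpK.2 hqK.2 hw hw'

/-- A path through an edge incident to its starting vertex begins with that edge. -/
theorem Walk.IsPath.exists_eq_cons_of_mem_edges {u a w : V} {q : G.Walk u w} (hq : q.IsPath)
    (he : s(u, a) ∈ q.edges) :
    ∃ (h : G.Adj u a) (q' : G.Walk a w), q = cons h q' := by
  cases q with
  | nil => simp at he
  | @cons _ c _ h q =>
    rw [cons_isPath_iff] at hq
    rw [edges_cons, List.mem_cons] at he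
    obtain he | he := he
    · obtain rfl := Sym2.congr_right.mp he
      exact ⟨h, q, rfl⟩
    · exact absurd (q.fst_mem_support_of_mem_edges he) hq.2

/-- The combinatorial Kron reduction, onto `K`, of the subgraph induced on `A`. -/
def IsKronReduction (G : SimpleGraph V) (A K : Set V) (H : SimpleGraph K) : Prop :=
  ∀ u w : K, H.Adj u w ↔ u ≠ w ∧
    ∃ p : G.Walk u.1 w.1, p.IsPath ∧ (∀ x ∈ p.support, x ∈ A) ∧
      (∀ x ∈ p.support, x ≠ u.1 → x ≠ w.1 → x ∉ K)

namespace IsKronReduction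

variable {A K : Set V} {H : SimpleGraph K}

theorem reachable (hH : G.IsKronReduction A K H) {u w : K} (p : G.Walk u.1 w.1)
    (hp : p.IsPath) (hpA : ∀ x ∈ p.support, x ∈ A) : H.Reachable u w := by
  classical
  induction hn : p.length using Nat.strong_induction_on generalizing u w with
  | _ n ih =>
    subst hn
    by_cases h : ∃ x ∈ p.support, x ≠ u.1 ∧ x ≠ w.1 ∧ x ∈ K
    · obtain ⟨x, hx, hxu, hxw, hxK⟩ := h
      have htake := ih _ (Walk.length_takeUntil_lt_length hx hxw) (w := ⟨x, hxK⟩) _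
        (hp.takeUntil hx) (fun y hy => hpA y (p.support_takeUntil_subset_support hx hy)) rfl
      have hdrop := ih _ (Walk.length_dropUntil_lt_length hx hxu) (u := ⟨x, hxK⟩) _
        (hp.dropUntil hx) (fun y hy => hpA y (p.support_dropUntil_subset_support hx hy)) rfl
      exact htake.trans hdrop
    · obtain rfl | huw := eq_or_ne u w
      · rfl
      · exact ((hH u w).mpr ⟨huw, p, hp, hpA,
          fun x hx hxu hxw hxK => h ⟨x, hx, hxu, hxw, hxK⟩⟩).reachable

theorem isAcyclic [Finite V] (hH : G.IsKronReduction A K H) (hG : G.IsAcyclic)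
    (hdeg : ∀ x ∈ A, 3 ≤ (A ∩ G.neighborSet x).ncard → x ∈ K) : H.IsAcyclic := by
  rw [isAcyclic_iff_forall_adj_isBridge]
  intro u w huw
  obtain ⟨hne, p, hp, hpA, hpK⟩ := (hH u w).mp huw
  obtain ⟨u, hu⟩ := u
  obtain ⟨w, hw⟩ := w
  dsimp only at p hp hpA hpK
  cases p with
  | nil => exact absurd rfl hne
  | @cons _ a _ hua p =>
    rw [Walk.cons_isPath_iff] at hp
    simp only [Walk.support_cons, List.mem_cons, forall_eq_or_imp] at hpA hpK
    have end_eq {z : V} (hz : z ∈ K) (q : G.Walk u z) (hq : q.IsPath)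
        (hqA : ∀ x ∈ q.support, x ∈ A) (hqK : ∀ x ∈ q.support, x ≠ u → x ≠ z → x ∉ K)
        (he : s(u, a) ∈ q.edges) : w = z := by
      obtain ⟨h, q, rfl⟩ := hq.exists_eq_cons_of_mem_edges he
      rw [Walk.cons_isPath_iff] at hq
      simp only [Walk.support_cons, List.mem_cons, forall_eq_or_imp] at hqA hqK
      exact hp.1.end_unique_of_branch_mem hdeg hq.1 hua hpA.1 hp.2 hq.2 hpA.2 hqA.2
        (fun x hx => hpK.2 x hx fun h => hp.2 (h ▸ hx))
        (fun x hx => hqK.2 x hx fun h => hq.2 (h ▸ hx)) hw hz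
    have adj_reachable {x y : K} (hxy : (H.deleteEdges {s(⟨u, hu⟩, ⟨w, hw⟩)}).Adj x y) :
        (G.deleteEdges {s(u, a)}).Reachable x.1 y.1 := by
      rw [deleteEdges_adj, Set.mem_singleton_iff] at hxy
      obtain ⟨-, q, hq, hqA, hqK⟩ := (hH x y).mp hxy.1
      refine reachable_deleteEdges_iff_exists_walk.mpr ⟨q, fun he => hxy.2 ?_⟩
      obtain ⟨x, hx⟩ := x
      obtain ⟨y, hy⟩ := y
      dsimp only at q hq hqA hqK he
      have huq := q.fst_mem_support_of_mem_edges he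
      have hend : u = x ∨ u = y := by
        by_contra! h
        exact hqK u huq h.1 h.2 hu
      obtain rfl | rfl := hend
      · obtain rfl := end_eq hy q hq hqA hqK he
        rfl
      · obtain rfl := end_eq hx q.reverse hq.reverse (by simpa using hqA)
          (fun z hz hzu hzx => hqK z (by simpa using hz) hzx hzu) (by simpa using he)
        exact Sym2.eq_swap
    have walk_reachable {x y : K} (q : (H.deleteEdges {s(⟨u, hu⟩, ⟨w, hw⟩)}).Walk x y) :
        (G.deleteEdges {s(u, a)}).Reachable x.1 y.1 := by
      induction q with
      | nil => rfl
      | cons h _ ih => exact (adj_reachable h).trans ih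
    rw [isBridge_iff]
    rintro ⟨q⟩
    have haw : (G.deleteEdges {s(u, a)}).Reachable a w :=
      reachable_deleteEdges_iff_exists_walk.mpr
        ⟨p, fun he => hp.2 (p.fst_mem_support_of_mem_edges he)⟩
    exact isBridge_iff.mp (isAcyclic_iff_forall_adj_isBridge.mp hG hua)
      ((walk_reachable q).trans haw.symm)

end IsKronReduction

end SimpleGraph


/-- **Sufficiency direction of the radialization theorem.**
Let `G` be a finite tree, `S` a nonempty vertex set, and `VT` the vertex set of
the minimal subtree `T` of `G` spanning `S` (the union over all pairs of
vertices of `S` of the unique `G`-path between them); being a subtree of the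
tree `G`, `T` is the subgraph of `G` induced on `VT`, and the degree in `T` of
a vertex `x` is `(VT ∩ G.neighborSet x).ncard`. Let `K` be any vertex set with
`S ⊆ K ⊆ VT` containing every vertex of `T` of degree at least 3 in `T`.
Then the Kron reduction `H` of `T` onto `K` — two kept vertices being
adjacent iff they are distinct and every internal vertex of the unique path of
`T` between them lies outside `K` — is a tree. -/
theorem radialization_sufficiency {V : Type} [Fintype V] [DecidableEq V]
    (G : SimpleGraph V) (hG : G.IsTree)
    (S : Set V) (hS : S.Nonempty)
    (VT : Set V)
    (hVT : VT = {x | ∃ s ∈ S, ∃ t ∈ S, ∃ p : G.Walk s t, p.IsPath ∧ x ∈ p.support})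
    (K : Set V) (hSK : S ⊆ K) (hKVT : K ⊆ VT)
    (hdeg : ∀ x ∈ VT, 3 ≤ (VT ∩ G.neighborSet x).ncard → x ∈ K)
    (H : SimpleGraph K)
    (hH : ∀ u w : K, H.Adj u w ↔ u ≠ w ∧
      ∃ p : G.Walk u.1 w.1, p.IsPath ∧ (∀ x ∈ p.support, x ∈ VT) ∧
        (∀ x ∈ p.support, x ≠ u.1 → x ≠ w.1 → x ∉ K)) :
    H.IsTree := by
  have hK : G.IsKronReduction VT K H := hH
  refine ⟨?_, hK.isAcyclic hG.isAcyclic hdeg⟩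
  have reach_terminals {s t : V} (hs : s ∈ S) (ht : t ∈ S) :
      H.Reachable ⟨s, hSK hs⟩ ⟨t, hSK ht⟩ := by
    obtain ⟨p, hp⟩ := hG.connected.exists_isPath s t
    exact hK.reachable (u := ⟨s, hSK hs⟩) (w := ⟨t, hSK ht⟩) p hp
      fun x hx => hVT ▸ ⟨s, hs, t, ht, p, hp, hx⟩
  obtain ⟨r, hr⟩ := hS
  refine (SimpleGraph.connected_iff_exists_forall_reachable _).mpr ⟨⟨r, hSK hr⟩, ?_⟩
  rintro ⟨x, hxK⟩
  have hxVT := hKVT hxK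
  rw [hVT] at hxVT
  obtain ⟨s, hs, t, ht, p, hp, hx⟩ := hxVT
  refine (reach_terminals hr hs).trans ?_
  exact hK.reachable (u := ⟨s, hSK hs⟩) (w := ⟨x, hxK⟩) (p.takeUntil x hx) (hp.takeUntil hx)
    fun y hy => hVT ▸ ⟨s, hs, t, ht, p, hp, p.support_takeUntil_subset_support hx hy⟩
end

section
/- Let G be a finite tree, let S be a nonempty subset of its vertices, and let T be the minimal subtree of G spanning S (the union over all pairs of vertices of S of the unique G-path between them). Let K be any vertex set with S ⊆ K ⊆ V(T), and suppose there exists a vertex v ∈ V(T) \ K whose degree in T is at least 3. Define the graph H on vertex set K by: u is adjacent to w in H if and only if u ≠ w and every internal vertex of the unique path in T between u and w lies outside K. Then H contains three pairwise adjacent vertices (a 3-cycle); in particular, H is not a tree. Hence every vertex of degree at least 3 of T must be kept to preserve radiality, establishing the minimality of the kept set in Theorem 1. -/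
open SimpleGraph

namespace SimpleGraph

variable {V : Type*} {G : SimpleGraph V}

/-- A path ending in `K` has a part, with the same start, that meets `K` only at its end. -/
theorem Walk.IsPath.exists_isPath_to_first_mem {K : Set V} {u w : V} {p : G.Walk u w}
    (hp : p.IsPath) (hw : w ∈ K) :
    ∃ k ∈ K, ∃ q : G.Walk u k, q.IsPath ∧ (∀ x ∈ q.support, x ∈ p.support) ∧
      ∀ x ∈ q.support, x ≠ k → x ∉ K := by
  induction p with
  | nil => exact ⟨_, hw, Walk.nil, Walk.IsPath.nil, by simp, by simp⟩
  | @cons u v w h p ih =>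
    rw [Walk.cons_isPath_iff] at hp
    by_cases hu : u ∈ K
    · exact ⟨u, hu, Walk.nil, Walk.IsPath.nil, by simp, by simp⟩
    · obtain ⟨k, hk, q, hq, hqp, hqK⟩ := ih hp.1 hw
      refine ⟨k, hk, Walk.cons h q, hq.cons fun hx => hp.2 (hqp _ hx), ?_, ?_⟩
      · intro x hx
        rw [Walk.support_cons, List.mem_cons] at hx ⊢
        exact hx.imp_right (hqp x)
      · intro x hx hxk
        rw [Walk.support_cons, List.mem_cons] at hx
        rcases hx with rfl | hx
        · exact hu
        · exact hqK x hx hxk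

/-- From a vertex `n` on a path with both ends in `S`, some end can be reached along the path
without visiting a given other vertex `v`. -/
theorem Walk.IsPath.exists_isPath_to_end_avoiding {S : Set V} {s t n v : V} {p : G.Walk s t}
    (hp : p.IsPath) (hs : s ∈ S) (ht : t ∈ S) (hn : n ∈ p.support) (hnv : n ≠ v) :
    ∃ r ∈ S, ∃ q : G.Walk n r, q.IsPath ∧ (∀ x ∈ q.support, x ∈ p.support) ∧
      v ∉ q.support := by
  classical
  by_cases hv : v ∈ (p.takeUntil n hn).support
  · refine ⟨t, ht, p.dropUntil n hn, hp.dropUntil hn,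
      fun x hx => p.support_dropUntil_subset_support hn hx, fun hv' => ?_⟩
    have hnodup := hp.support_nodup
    rw [← p.take_spec hn, Walk.support_append, List.nodup_append] at hnodup
    rw [Walk.mem_support_iff] at hv'
    exact hnodup.2.2 v hv v (hv'.resolve_left hnv.symm) rfl
  · exact ⟨s, hs, (p.takeUntil n hn).reverse, (hp.takeUntil hn).reverse,
      fun x hx => p.support_takeUntil_subset_support hn (by simpa using hx), by simpa using hv⟩

/-- In an acyclic graph, paths that leave a vertex `v` through different neighbors are disjoint
apart from `v`. -/
theorem IsAcyclic.disjoint_support_of_neighbors_ne (hG : G.IsAcyclic) {v m n k l : V}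
    (hm : G.Adj v m) (hn : G.Adj v n) (hmn : m ≠ n) {p : G.Walk m k} {q : G.Walk n l}
    (hp : p.IsPath) (hq : q.IsPath) (hvp : v ∉ p.support) (hvq : v ∉ q.support) :
    p.support.Disjoint q.support := by
  classical
  intro x hxp hxq
  have hp' : (Walk.cons hm (p.takeUntil x hxp)).IsPath :=
    (hp.takeUntil hxp).cons fun h => hvp (p.support_takeUntil_subset_support hxp h)
  have hq' : (Walk.cons hn (q.takeUntil x hxq)).IsPath :=
    (hq.takeUntil hxq).cons fun h => hvq (q.support_takeUntil_subset_support hxq h)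
  have h := congrArg (fun r : G.Path v x => r.1.snd)
    ((hG.subsingleton_path v x).elim ⟨_, hp'⟩ ⟨_, hq'⟩)
  exact hmn (by simpa using h)

/-- In an acyclic graph, paths that leave a vertex `v` through different neighbors join to a
path through `v`. -/
theorem IsAcyclic.isPath_join_of_neighbors_ne (hG : G.IsAcyclic) {v m n k l : V}
    (hm : G.Adj v m) (hn : G.Adj v n) (hmn : m ≠ n) {p : G.Walk m k} {q : G.Walk n l}
    (hp : p.IsPath) (hq : q.IsPath) (hvp : v ∉ p.support) (hvq : v ∉ q.support) :
    ((Walk.cons hm p).reverse.append (Walk.cons hn q)).IsPath := by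
  have hdisj := hG.disjoint_support_of_neighbors_ne hm hn hmn hp hq hvp hvq
  rw [Walk.isPath_def, Walk.support_append, List.nodup_append]
  refine ⟨(hp.cons hvp).reverse.support_nodup, by simpa using hq.support_nodup, ?_⟩
  intro x hx y hy hxy
  subst hxy
  simp only [Walk.support_reverse, Walk.support_cons, List.mem_reverse, List.mem_cons,
    List.tail_cons] at hx hy
  rcases hx with rfl | hx
  · exact hvq hy
  · exact hdisj hx hy

end SimpleGraph

/-- **Minimality direction of the radialization theorem.**
Let `G` be a finite tree, `S` a nonempty vertex set, and `VT` the vertex set of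
the minimal subtree `T` of `G` spanning `S` (the union over all pairs of
vertices of `S` of the unique `G`-path between them); being a subtree of the
tree `G`, `T` is the subgraph of `G` induced on `VT`, and the degree in `T` of
a vertex `x` is `(VT ∩ G.neighborSet x).ncard`. Let `K` be a vertex set with
`S ⊆ K ⊆ VT`, and suppose some vertex `v ∈ VT \ K` has degree at least 3 in
`T`. Then the Kron reduction `H` of `T` onto `K` — two kept vertices being
adjacent iff they are distinct and every internal vertex of the unique path of
`T` between them lies outside `K` — contains three pairwise adjacent vertices;
in particular, `H` is not a tree. -/
theorem radialization_minimality {V : Type} [Fintype V] [DecidableEq V]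
    (G : SimpleGraph V) (hG : G.IsTree)
    (S : Set V) (hS : S.Nonempty)
    (VT : Set V)
    (hVT : VT = {x | ∃ s ∈ S, ∃ t ∈ S, ∃ p : G.Walk s t, p.IsPath ∧ x ∈ p.support})
    (K : Set V) (hSK : S ⊆ K) (hKVT : K ⊆ VT)
    (hv : ∃ v ∈ VT, v ∉ K ∧ 3 ≤ (VT ∩ G.neighborSet v).ncard)
    (H : SimpleGraph K)
    (hH : ∀ u w : K, H.Adj u w ↔ u ≠ w ∧
      ∃ p : G.Walk u.1 w.1, p.IsPath ∧ (∀ x ∈ p.support, x ∈ VT) ∧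
        (∀ x ∈ p.support, x ≠ u.1 → x ≠ w.1 → x ∉ K)) :
    (∃ a b c : K, H.Adj a b ∧ H.Adj b c ∧ H.Adj a c) ∧ ¬ H.IsTree := by
  obtain ⟨v, hvVT, hvK, hdeg⟩ := hv
  have branch : ∀ n ∈ VT ∩ G.neighborSet v, ∃ k : K, ∃ q : G.Walk n k.1, q.IsPath ∧
      v ∉ q.support ∧ (∀ x ∈ q.support, x ∈ VT) ∧ ∀ x ∈ q.support, x ≠ k.1 → x ∉ K := by
    rintro n ⟨hn, hvn⟩
    rw [hVT] at hn
    obtain ⟨s, hs, t, ht, p, hp, hnp⟩ := hn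
    obtain ⟨r, hr, q, hq, hqp, hvq⟩ :=
      hp.exists_isPath_to_end_avoiding hs ht hnp (G.ne_of_adj hvn).symm
    obtain ⟨k, hk, q', hq', hqq', hqK⟩ := hq.exists_isPath_to_first_mem (hSK hr)
    refine ⟨⟨k, hk⟩, q', hq', fun h => hvq (hqq' v h), fun x hx => ?_, hqK⟩
    rw [hVT]
    exact ⟨s, hs, t, ht, p, hp, hqp x (hqq' x hx)⟩
  have : Nonempty K := (hS.mono hSK).to_subtype
  choose! k hk using branch
  have adj : ∀ m ∈ VT ∩ G.neighborSet v, ∀ n ∈ VT ∩ G.neighborSet v, m ≠ n →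
      H.Adj (k m) (k n) := by
    intro m hm n hn hmn
    have hvm : G.Adj v m := hm.2
    have hvn : G.Adj v n := hn.2
    obtain ⟨p, hp, hvp, hpVT, hpK⟩ := hk m hm
    obtain ⟨q, hq, hvq, hqVT, hqK⟩ := hk n hn
    have hdisj := hG.isAcyclic.disjoint_support_of_neighbors_ne hvm hvn hmn hp hq hvp hvq
    have hmem : ∀ x ∈ ((Walk.cons hvm p).reverse.append (Walk.cons hvn q)).support,
        x = v ∨ x ∈ p.support ∨ x ∈ q.support := by
      intro x hx
      simp only [Walk.mem_support_append_iff, Walk.support_reverse, Walk.support_cons,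
        List.mem_reverse, List.mem_cons] at hx
      tauto
    refine (hH _ _).2 ⟨fun h => hdisj p.end_mem_support (by simp [h]), _,
      hG.isAcyclic.isPath_join_of_neighbors_ne hvm hvn hmn hp hq hvp hvq, ?_, ?_⟩
    · intro x hx
      rcases hmem x hx with rfl | hx | hx
      exacts [hvVT, hpVT x hx, hqVT x hx]
    · intro x hx hxm hxn
      rcases hmem x hx with rfl | hx | hx
      exacts [hvK, hpK x hx hxm, hqK x hx hxn]
  obtain ⟨a, b, c, ha, hb, hc, hab, hac, hbc⟩ := (Set.two_lt_ncard_iff (Set.toFinite _)).1 hdeg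
  have h₁ := adj a ha b hb hab
  have h₂ := adj b hb c hc hbc
  have h₃ := adj a ha c hc hac
  exact ⟨⟨_, _, _, h₁, h₂, h₃⟩, fun hT => hT.isAcyclic.cliqueFree le_rfl _
    (is3Clique_triple_iff.2 ⟨h₁, h₃, h₂⟩)⟩
end

section
/- Let G be a finite connected simple graph and let K be a nonempty subset of its vertices. Define the graph H on vertex set K by: u is adjacent to w in H if and only if u ≠ w and there exists a walk in G from u to w all of whose internal vertices lie outside K. Then H is connected. -/
/-- If any two distinct vertices of `K` joined by a walk of `G` with no internal vertex in `K` are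
adjacent in `H`, then any two vertices of `K` joined by a walk of `G` are reachable in `H`. -/
theorem SimpleGraph.Walk.reachable_of_adj_of_internal_notMem {V : Type*} {G : SimpleGraph V}
    {K : Set V} {H : SimpleGraph K}
    (hH : ∀ u w : K, u ≠ w →
      (∃ p : G.Walk u.1 w.1, ∀ x ∈ p.support, x ≠ u.1 → x ≠ w.1 → x ∉ K) → H.Adj u w)
    (u w : K) (p : G.Walk u.1 w.1) : H.Reachable u w := by
  classical
  induction hn : p.length using Nat.strong_induction_on generalizing u w with
  | _ n ih =>
    subst hn
    by_cases huw : u = w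
    · exact huw ▸ SimpleGraph.Reachable.refl u
    by_cases hp : ∀ x ∈ p.support, x ≠ u.1 → x ≠ w.1 → x ∉ K
    · exact (hH u w huw ⟨p, hp⟩).reachable
    push Not at hp
    obtain ⟨x, hx, hxu, hxw, hxK⟩ := hp
    have hsum : (p.takeUntil x hx).length + (p.dropUntil x hx).length = p.length := by
      rw [← SimpleGraph.Walk.length_append, SimpleGraph.Walk.take_spec]
    have htake : 0 < (p.takeUntil x hx).length :=
      Nat.pos_of_ne_zero fun h => hxu (SimpleGraph.Walk.eq_of_length_eq_zero h).symm
    have hdrop : 0 < (p.dropUntil x hx).length :=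
      Nat.pos_of_ne_zero fun h => hxw (SimpleGraph.Walk.eq_of_length_eq_zero h)
    exact (ih _ (by omega) u ⟨x, hxK⟩ (p.takeUntil x hx) rfl).trans
      (ih _ (by omega) ⟨x, hxK⟩ w (p.dropUntil x hx) rfl)

/-- **Kron reduction preserves connectivity.**
Let `G` be a finite connected simple graph and `K` a nonempty set of vertices.
The graph `H` on `K`, in which two kept vertices are adjacent iff they are
distinct and joined in `G` by a walk all of whose internal vertices lie
outside `K`, is connected. -/
theorem kron_reduction_preserves_connectivity {V : Type} [Fintype V]
    (G : SimpleGraph V) (hG : G.Connected)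
    (K : Set V) (hK : K.Nonempty)
    (H : SimpleGraph K)
    (hH : ∀ u w : K, H.Adj u w ↔ u ≠ w ∧
      ∃ p : G.Walk u.1 w.1, ∀ x ∈ p.support, x ≠ u.1 → x ≠ w.1 → x ∉ K) :
    H.Connected := by
  have : Nonempty K := hK.to_subtype
  refine ⟨fun u w => ?_⟩
  obtain ⟨p⟩ := hG.preconnected u.1 w.1
  exact SimpleGraph.Walk.reachable_of_adj_of_internal_notMem
    (fun u w huw h => (hH u w).2 ⟨huw, h⟩) u w p
end
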